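/- Let m ≥ 3 be an integer and let A be an m×m random matrix whose entries are independent standard Gaussian N(0,1) random variables. Then for every real α > 1, the probability that A is singular or satisfies κ₂(A) > m·α is strictly less than 5.6/α. -/

import Mathlib

/-!
Write `A` for the square Gaussian matrix, and border it on the right by an independent standard
Gaussian column `s`. The matrix `B = [A | s]` has `m` independent standard Gaussian rows in dimension
`m + 1`, so its law is invariant under rotations of that space, and its kernel is almost surely a
line. The proof compares the condition number of `A` with the angle between this kernel and the last
coordinate axis.

*From `A` to `B`.* If `A` is invertible, the kernel of `B` is spanned by `(A⁻¹ s, -1)`, so the tangent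
of that angle is `‖A⁻¹ s‖`. Taking `q` with `‖q‖ = ‖A⁻¹‖` and `|⟪q, s⟫| ≤ ‖A⁻¹ s‖`
(`exists_form_le`), one gets `‖A⁻¹ s‖ ≥ (3/4) ‖A⁻¹‖` with probability at least `9/20` over `s`. As
`‖A‖ ≤ ‖B‖`, an ill-conditioned `A` produces, with probability at least `9/20`, a matrix `B` such that
`K ≤ ‖B‖ tan(angle)` for `K = (3/4) m α`; this is the event `tilted`, and a singular `A` produces it
for every `s`. By Markov's inequality, `(9/20) P(A ill-conditioned) ≤ P(tilted)`
(`prob_ill_conditioned_le`).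

*The angle.* By rotation invariance the axis may be replaced by a Gaussian vector `f` independent of
`B` (`prob_tilted_eq`). For fixed `B`, the event says that a standard Gaussian coordinate of `f`, along
the kernel, is at most `‖B‖ / K` times the norm of the `m` other ones, which has expectation at most
`√m`. As the Gaussian density is at most `2/5`, `P(tilted) ≤ (4/5) (√m / K) E‖B‖`
(`prob_tilted_le_lintegral`).

*The norm of `B`.* For a Gaussian `f` independent of `B`, the moment of order `2m` of `‖B f‖` is a
product of two chi-square moments, and it dominates `E‖B‖^(2m)` times the moment of order `2m` of a
standard Gaussian variable. The quotient of these explicit products is at most `(5.4 m)^m`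
(`chiMoment_bound`), hence `E‖B‖ ≤ √(5.4 m)` (`lintegral_norm_rowOp_le`).

Altogether the probability is at most `(20/9) (4/5) (4/3) √5.4 / α < 5.6 / α`.
-/

open MeasureTheory ProbabilityTheory

/-- The spectral (ℓ₂ operator) norm of a square real matrix. -/
noncomputable def l2OpNorm {k : Type*} [Fintype k] [DecidableEq k]
    (A : Matrix k k ℝ) : ℝ :=
  ‖LinearMap.toContinuousLinearMap (Matrix.toEuclideanLin A)‖

namespace GaussCond

open scoped ENNReal NNReal RealInnerProductSpace

/-! ### Marginals, density and moments of the standard Gaussian measure -/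

section Gauss

variable {E : Type*} [NormedAddCommGroup E] [InnerProductSpace ℝ E] [FiniteDimensional ℝ E]
  [MeasurableSpace E] [BorelSpace E]

/-- One-dimensional marginals of the standard Gaussian measure. -/
lemma map_inner_stdGaussian (q : E) :
    (stdGaussian E).map (fun f => ⟪q, f⟫) = gaussianReal 0 (‖q‖₊ ^ 2) := by
  apply Measure.ext_of_charFun
  ext t
  rw [charFun_gaussianReal, charFun_apply, integral_map (by fun_prop) (by fun_prop)]
  have := charFun_stdGaussian (t • q)
  rw [charFun_apply] at this
  convert this using 2
  · ext f
    simp [inner_smul_right, real_inner_comm]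
  · simp [norm_smul]
    ring_nf
    simp [← Complex.ofReal_pow]

lemma map_inner_unit {q : E} (hq : ‖q‖ = 1) :
    (stdGaussian E).map (fun f => ⟪q, f⟫) = gaussianReal 0 1 := by
  rw [map_inner_stdGaussian]
  congr 1
  ext
  simp [hq]

/-- The density of the standard Gaussian measure, identified through its characteristic
function. -/
lemma stdGaussian_eq_withDensity :
    stdGaussian E = (volume : Measure E).withDensity (fun x => ENNReal.ofReal
      ((2 * Real.pi) ^ (-(Module.finrank ℝ E : ℝ) / 2) * Real.exp (-(1 / 2) * ‖x‖ ^ 2))) := by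
  set C : ℝ := (2 * Real.pi) ^ (-(Module.finrank ℝ E : ℝ) / 2) with hC
  have hCpos : 0 < C := by positivity
  have key : ∀ t : E, ∫ x : E, ((C * Real.exp (-(1 / 2) * ‖x‖ ^ 2) : ℝ) : ℂ)
      * Complex.exp (⟪x, t⟫ * Complex.I) = Complex.exp (-‖t‖ ^ 2 / 2) := by
    intro t
    have h := GaussianFourier.integral_cexp_neg_mul_sq_norm_add (V := E) (b := (1 / 2 : ℂ))
      (by norm_num) Complex.I t
    have h2 : ∀ x : E, ((C * Real.exp (-(1 / 2) * ‖x‖ ^ 2) : ℝ) : ℂ)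
        * Complex.exp (⟪x, t⟫ * Complex.I) =
        (C : ℂ) * Complex.exp (-(1 / 2) * (‖x‖ : ℂ) ^ 2 + Complex.I * ⟪t, x⟫) := by
      intro x
      rw [Complex.exp_add]
      push_cast
      rw [real_inner_comm, mul_comm Complex.I]
      ring
    simp_rw [h2]
    rw [integral_const_mul, h, ← mul_assoc]
    have h3 : (C : ℂ) * (Real.pi / (1 / 2 : ℂ)) ^ (Module.finrank ℝ E / 2 : ℂ) = 1 := by
      have : (Real.pi / (1 / 2 : ℂ)) ^ (Module.finrank ℝ E / 2 : ℂ)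
          = (((2 * Real.pi) ^ ((Module.finrank ℝ E : ℝ) / 2) : ℝ) : ℂ) := by
        rw [Complex.ofReal_cpow (by positivity)]
        push_cast
        congr 1
        ring
      rw [this, hC, ← Complex.ofReal_mul, ← Real.rpow_add (by positivity)]
      simp [neg_div]
    rw [h3, one_mul]
    congr 1
    rw [Complex.I_sq]
    ring
  have hint : Integrable (fun x : E => C * Real.exp (-(1 / 2) * ‖x‖ ^ 2)) := by
    -- A non-integrable density would have Bochner integral `0`, while `key 0` gives `1`.
    by_contra hcon
    have h0 := key 0
    simp only [inner_zero_right, Complex.ofReal_zero, zero_mul, Complex.exp_zero, mul_one,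
      norm_zero] at h0
    rw [integral_complex_ofReal, integral_undef hcon] at h0
    norm_num at h0
  have hfin : IsFiniteMeasure ((volume : Measure E).withDensity (fun x => ENNReal.ofReal
      (C * Real.exp (-(1 / 2) * ‖x‖ ^ 2)))) :=
    isFiniteMeasure_withDensity_ofReal hint.2
  apply Measure.ext_of_charFun
  ext t
  rw [charFun_stdGaussian, charFun_apply, integral_withDensity_eq_integral_toReal_smul
    (by fun_prop) (by simp), ← key t]
  congr 1
  ext x
  rw [ENNReal.toReal_ofReal (by positivity)]
  simp

lemma stdGaussian_absolutelyContinuous : stdGaussian E ≪ (volume : Measure E) := by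
  rw [stdGaussian_eq_withDensity]
  exact withDensity_absolutelyContinuous _ _

/-- A proper subspace is null, the Gaussian measure being absolutely continuous. -/
lemma stdGaussian_submodule {s : Submodule ℝ E} (hs : s ≠ ⊤) : stdGaussian E s = 0 :=
  stdGaussian_absolutelyContinuous (Measure.addHaar_submodule _ s hs)

/-- The product `x (x + 2) ⋯ (x + 2k - 2)`; for `x = n` this is the moment of order `2k` of the norm
of a standard Gaussian vector in dimension `n`. -/
def chiMoment (k : ℕ) (x : ℝ) : ℝ := ∏ j ∈ Finset.range k, (x + 2 * j)

/-- Passing from `k` to `k + 1` multiplies the Gamma factor of the radial integral by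
`n / 2 + k` and the power of `1 / 2` by `2`. -/
lemma radial_integral (n : ℕ) (hn : 0 < n) (k : ℕ) :
    ∫ y in Set.Ioi (0 : ℝ), y ^ (n - 1) • (y ^ (2 * k) * Real.exp (-(1 / 2) * y ^ 2)) =
    chiMoment k n * ∫ y in Set.Ioi (0 : ℝ), y ^ (n - 1) • Real.exp (-(1 / 2) * y ^ 2) := by
  have h : ∀ j : ℕ, ∫ y in Set.Ioi (0 : ℝ), y ^ (n - 1) • (y ^ (2 * j) * Real.exp (-(1 / 2) * y ^ 2))
      = (1 / 2 : ℝ) ^ (-((n : ℝ) / 2 + j)) * (1 / 2) * Real.Gamma ((n : ℝ) / 2 + j) := by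
    intro j
    have := integral_rpow_mul_exp_neg_mul_rpow (p := 2) (q := (n : ℝ) - 1 + 2 * j)
      (b := 1 / 2) (by norm_num) (by
        have : (0 : ℝ) < n := by exact_mod_cast hn
        have : (0 : ℝ) ≤ j := by positivity
        linarith) (by norm_num)
    have e1 : ((n : ℝ) - 1 + 2 * j + 1) / 2 = (n : ℝ) / 2 + j := by ring
    rw [neg_div, e1] at this
    rw [← this]
    refine setIntegral_congr_fun measurableSet_Ioi fun y hy => ?_
    have hy : (0 : ℝ) < y := hy
    have e2 : (n : ℝ) - 1 + 2 * j = ((n - 1 + 2 * j : ℕ) : ℝ) := by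
      push_cast [Nat.cast_sub hn]; ring
    simp only [smul_eq_mul]
    rw [e2, Real.rpow_natCast, Real.rpow_two, pow_add]
    ring
  have h0 := h 0
  simp only [mul_zero, pow_zero, one_mul, Nat.cast_zero, add_zero] at h0
  rw [h k, h0]
  induction k with
  | zero => simp [chiMoment]
  | succ k ih =>
    have hpos : (0 : ℝ) < (n : ℝ) / 2 + k := by positivity
    have e3 : (n : ℝ) / 2 + (k + 1 : ℕ) = ((n : ℝ) / 2 + k) + 1 := by push_cast; ring
    rw [e3, Real.Gamma_add_one hpos.ne', neg_add, Real.rpow_add (by norm_num)]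
    have e4 : chiMoment (k + 1) n = chiMoment k n * (n + 2 * k) := by
      simp [chiMoment, Finset.prod_range_succ]
    have e5 : (1 / 2 : ℝ) ^ (-1 : ℝ) = 2 := by
      rw [Real.rpow_neg_one]; norm_num
    rw [e4, e5]
    linear_combination (n + 2 * k) * ih

lemma integral_norm_pow_stdGaussian (hE : 0 < Module.finrank ℝ E) (k : ℕ) :
    ∫ x, ‖x‖ ^ (2 * k) ∂(stdGaussian E) = chiMoment k (Module.finrank ℝ E) := by
  have : Nontrivial E := Module.nontrivial_of_finrank_pos hE
  set C : ℝ := (2 * Real.pi) ^ (-(Module.finrank ℝ E : ℝ) / 2) with hC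
  have h : ∀ j : ℕ, ∫ x, ‖x‖ ^ (2 * j) ∂(stdGaussian E) =
      ∫ x : E, (fun y : ℝ => C * (y ^ (2 * j) * Real.exp (-(1 / 2) * y ^ 2))) ‖x‖ := by
    intro j
    rw [stdGaussian_eq_withDensity, integral_withDensity_eq_integral_toReal_smul
      (by fun_prop) (by simp)]
    congr 1
    ext x
    rw [ENNReal.toReal_ofReal (by positivity)]
    simp only [smul_eq_mul]
    ring
  have h' : ∀ j : ℕ, ∫ x, ‖x‖ ^ (2 * j) ∂(stdGaussian E) =
      chiMoment j (Module.finrank ℝ E) * ∫ x, ‖x‖ ^ (2 * 0) ∂(stdGaussian E) := by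
    intro j
    rw [h, h,
      integral_fun_norm_addHaar volume fun y : ℝ => C * (y ^ (2 * j) * Real.exp (-(1 / 2) * y ^ 2)),
      integral_fun_norm_addHaar volume fun y : ℝ => C * (y ^ (2 * 0) * Real.exp (-(1 / 2) * y ^ 2))]
    have e : ∀ i : ℕ, ∫ y in Set.Ioi (0 : ℝ), y ^ (Module.finrank ℝ E - 1) •
        (C * (y ^ (2 * i) * Real.exp (-(1 / 2) * y ^ 2))) = C * (chiMoment i (Module.finrank ℝ E) *
          ∫ y in Set.Ioi (0 : ℝ), y ^ (Module.finrank ℝ E - 1) • Real.exp (-(1 / 2) * y ^ 2)) := by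
      intro i
      rw [← radial_integral _ hE, ← integral_const_mul]
      congr 1
      ext y
      simp only [smul_eq_mul]
      ring
    rw [e, e]
    simp [chiMoment]
    ring
  rw [h' k]
  simp

lemma lintegral_norm_pow_stdGaussian (hE : 0 < Module.finrank ℝ E) (k : ℕ) :
    ∫⁻ x, ENNReal.ofReal ‖x‖ ^ (2 * k) ∂(stdGaussian E) =
      ENNReal.ofReal (chiMoment k (Module.finrank ℝ E)) := by
  rw [← integral_norm_pow_stdGaussian hE, ofReal_integral_eq_lintegral_ofReal]
  · simp_rw [ENNReal.ofReal_pow (norm_nonneg _)]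
  · -- The Bochner integral of a non-integrable function is `0`, but the moment is positive.
    by_contra hcon
    have := integral_norm_pow_stdGaussian hE k
    rw [integral_undef hcon] at this
    have hp : 0 < chiMoment k (Module.finrank ℝ E) :=
      Finset.prod_pos fun j _ => by positivity
    exact hp.ne this
  · exact Filter.Eventually.of_forall fun x => by positivity

lemma stdGaussian_real : stdGaussian ℝ = gaussianReal 0 1 := by
  have := map_inner_unit (E := ℝ) (q := 1) (by simp)
  simpa using this

end Gauss

/-! ### Numerical bounds and inequalities between moments -/

section Numerics

/-- The factors `m, m + 2, …` and `m + 1, m + 3, …` interleave, so that the product of the two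
moments is `(3m - 1)! / (m - 1)!`. -/
lemma chiMoment_mul (m : ℕ) (hm : 1 ≤ m) :
    chiMoment m m * chiMoment m ((m : ℝ) + 1) * m.factorial * 3 = (3 * m).factorial := by
  have h1 : ∀ k : ℕ, chiMoment k m * chiMoment k ((m : ℝ) + 1) * (m - 1).factorial
      = (m - 1 + 2 * k).factorial := by
    intro k
    induction k with
    | zero => simp [chiMoment]
    | succ k ih =>
      have e : m - 1 + 2 * (k + 1) = (m - 1 + 2 * k) + 1 + 1 := by ring
      rw [e, Nat.factorial_succ, Nat.factorial_succ]
      push_cast [← ih, Nat.cast_sub hm]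
      simp only [chiMoment, Finset.prod_range_succ]
      ring
  have h2 := h1 m
  obtain ⟨l, rfl⟩ : ∃ l, m = l + 1 := ⟨m - 1, by omega⟩
  have e : 3 * (l + 1) = (l + 1 - 1 + 2 * (l + 1)) + 1 := by omega
  rw [e, Nat.factorial_succ (l + 1 - 1 + 2 * (l + 1)), Nat.cast_mul, ← h2, Nat.factorial_succ]
  push_cast
  ring

lemma chiMoment_one (m : ℕ) : chiMoment m 1 * 2 ^ m * m.factorial = (2 * m).factorial := by
  induction m with
  | zero => simp [chiMoment]
  | succ k ih =>
    have e : 2 * (k + 1) = 2 * k + 1 + 1 := by ring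
    rw [e, Nat.factorial_succ (2 * k + 1), Nat.factorial_succ (2 * k), Nat.factorial_succ k]
    push_cast [← ih]
    simp only [chiMoment, Finset.prod_range_succ]
    ring

/-- The binomial expansion truncated after the quadratic term. -/
lemma one_add_pow_lower (x : ℝ) (hx : 0 ≤ x) (n : ℕ) :
    1 + n * x + n * (n - 1) / 2 * x ^ 2 ≤ (1 + x) ^ n := by
  induction n with
  | zero => simp
  | succ k ih =>
    rw [pow_succ]
    have h := mul_le_mul_of_nonneg_right ih (by linarith : 0 ≤ 1 + x)
    refine le_trans ?_ h
    push_cast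
    have : 0 ≤ (k : ℝ) * (k - 1) := by
      rcases Nat.eq_zero_or_pos k with h | h
      · simp [h]
      · have : (1 : ℝ) ≤ k := by exact_mod_cast h
        nlinarith
    nlinarith [mul_nonneg this (pow_nonneg hx 3)]

/-- Induction on `m`: the step needs `(1 + 1 / m) ^ m ≥ 5 / 2 - 1 / (2 m)`, which the first three
terms of the binomial expansion give. -/
lemma factorial_bound (m : ℕ) (hm : 1 ≤ m) :
    ((3 * m).factorial : ℝ) * 2 ^ m ≤ 3 * (5.4 * m) ^ m * (2 * m).factorial := by
  induction m, hm using Nat.le_induction with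
  | base => norm_num [Nat.factorial]
  | succ m hm ih =>
    have e3 : 3 * (m + 1) = 3 * m + 1 + 1 + 1 := by ring
    have e2 : 2 * (m + 1) = 2 * m + 1 + 1 := by ring
    rw [e3, e2, Nat.factorial_succ, Nat.factorial_succ (3 * m + 1), Nat.factorial_succ (3 * m),
      Nat.factorial_succ (2 * m + 1), Nat.factorial_succ (2 * m)]
    push_cast
    have hm1 : (1 : ℝ) ≤ m := by exact_mod_cast hm
    have hm0 : (0 : ℝ) < m := by linarith
    set F : ℝ := ((2 * m).factorial : ℝ) with hF
    have hFp : 0 < F := by positivity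
    have hb : (m : ℝ) ^ m * (5 / 2 - 1 / (2 * m)) ≤ ((m : ℝ) + 1) ^ m := by
      have h := one_add_pow_lower (1 / m) (by positivity) m
      have e : ((m : ℝ) + 1) ^ m = (m : ℝ) ^ m * (1 + 1 / m) ^ m := by
        rw [← mul_pow]; congr 1; field_simp
      rw [e]
      refine mul_le_mul_of_nonneg_left (le_trans (le_of_eq ?_) h) (by positivity)
      field_simp
      ring
    have hc : 3 * (9 * (m : ℝ) ^ 2 + 9 * m + 2) ≤
        5.4 * (m + 1) * (2 * m + 1) * (5 / 2 - 1 / (2 * m)) := by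
      have : 5.4 * ((m : ℝ) + 1) * (2 * m + 1) * (5 / 2 - 1 / (2 * m))
          = 2.7 * (10 * m ^ 2 + 13 * m + 2 - 1 / m) := by
        field_simp
        ring
      rw [this]
      have : 1 / (m : ℝ) ≤ 1 := by
        rw [div_le_one hm0]; exact hm1
      nlinarith
    calc ((3 * (m : ℝ) + 2 + 1) * ((3 * m + 1 + 1) * ((3 * m + 1) * ((3 * m).factorial))))
          * 2 ^ (m + 1)
        = (((3 * m).factorial : ℝ) * 2 ^ m) * (2 * (3 * m + 3) * (3 * m + 2) * (3 * m + 1)) := by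
          ring
      _ ≤ (3 * (5.4 * m) ^ m * F) * (2 * (3 * m + 3) * (3 * m + 2) * (3 * m + 1)) := by
          gcongr
      _ = 3 * 5.4 ^ m * F * (2 * (m + 1)) * ((m : ℝ) ^ m * (3 * (9 * (m : ℝ) ^ 2 + 9 * m + 2))) := by
          rw [mul_pow]; ring
      _ ≤ 3 * 5.4 ^ m * F * (2 * (m + 1)) * ((m : ℝ) ^ m *
            (5.4 * (m + 1) * (2 * m + 1) * (5 / 2 - 1 / (2 * m)))) := by
          gcongr
      _ = 3 * 5.4 ^ m * F * (2 * (m + 1)) * (5.4 * (m + 1) * (2 * m + 1)) *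
            ((m : ℝ) ^ m * (5 / 2 - 1 / (2 * m))) := by ring
      _ ≤ 3 * 5.4 ^ m * F * (2 * (m + 1)) * (5.4 * (m + 1) * (2 * m + 1)) *
            ((m : ℝ) + 1) ^ m := by gcongr
      _ = 3 * (5.4 * ((m : ℝ) + 1)) ^ (m + 1) * ((2 * m + 1 + 1) * ((2 * m + 1) * F)) := by
          rw [mul_pow, pow_succ, pow_succ]; ring

lemma chiMoment_pos (k : ℕ) {x : ℝ} (hx : 0 < x) : 0 < chiMoment k x :=
  Finset.prod_pos fun j _ => by positivity

/-- The comparison of moments that bounds the expected operator norm. The constant `5.4`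
replaces the exact growth rate `27 / (2 e) ≈ 4.97`. -/
lemma chiMoment_bound (m : ℕ) (hm : 1 ≤ m) :
    chiMoment m m * chiMoment m ((m : ℝ) + 1) ≤ (5.4 * m) ^ m * chiMoment m 1 := by
  have h1 := chiMoment_mul m hm
  have h2 := chiMoment_one m
  have h3 := factorial_bound m hm
  rw [← h1, ← h2] at h3
  have hp : (0 : ℝ) < m.factorial * 3 * 2 ^ m := by positivity
  refine le_of_mul_le_mul_right ?_ hp
  linarith

/-- The constant `2 / 5` is an upper bound of `1 / √(2π)`. -/
lemma gaussianPDFReal_le (x : ℝ) :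
    gaussianPDFReal 0 1 x ≤ 2 / 5 * Real.exp (-(x ^ 2 / 2)) := by
  have h : (Real.sqrt (2 * Real.pi))⁻¹ ≤ 2 / 5 := by
    have h1 : (5 / 2 : ℝ) ≤ Real.sqrt (2 * Real.pi) := by
      apply Real.le_sqrt_of_sq_le
      nlinarith [Real.pi_gt_d2]
    calc (Real.sqrt (2 * Real.pi))⁻¹ ≤ (5 / 2 : ℝ)⁻¹ := inv_anti₀ (by norm_num) h1
      _ = 2 / 5 := by norm_num
  have e : gaussianPDFReal 0 1 x = (Real.sqrt (2 * Real.pi))⁻¹ * Real.exp (-(x ^ 2 / 2)) := by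
    simp [gaussianPDFReal, neg_div]
  rw [e]
  gcongr

lemma gaussianReal_abs_le (t : ℝ) :
    gaussianReal 0 1 {s | |s| ≤ t} ≤ ENNReal.ofReal (4 / 5 * t) := by
  have hs : {s : ℝ | |s| ≤ t} = Set.Icc (-t) t := by ext; simp [abs_le]
  rw [hs, gaussianReal_apply 0 one_ne_zero]
  calc ∫⁻ x in Set.Icc (-t) t, gaussianPDF 0 1 x
      ≤ ∫⁻ x in Set.Icc (-t) t, ENNReal.ofReal (2 / 5) := by
        refine lintegral_mono fun x => ENNReal.ofReal_le_ofReal ?_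
        refine (gaussianPDFReal_le x).trans ?_
        have : Real.exp (-(x ^ 2 / 2)) ≤ 1 := Real.exp_le_one_iff.2 (by nlinarith [sq_nonneg x])
        linarith
    _ = ENNReal.ofReal (4 / 5 * t) := by
        rw [setLIntegral_const, Real.volume_Icc, ← ENNReal.ofReal_mul (by norm_num)]
        congr 1
        ring

lemma exp_neg_le {u : ℝ} (hu : 0 ≤ u) : Real.exp (-u) ≤ 1 - u + u ^ 2 / 2 := by
  have h := Real.quadratic_le_exp_of_nonneg hu
  rw [Real.exp_neg]
  rw [inv_le_comm₀ (Real.exp_pos u) (by nlinarith [sq_nonneg (u - 1)])]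
  refine le_trans ?_ h
  rw [inv_le_iff_one_le_mul₀ (by nlinarith [sq_nonneg (u - 1)])]
  nlinarith [sq_nonneg (u ^ 2)]

/-- The density is bounded by `2 / 5` times the Taylor polynomial of degree four of
`exp (- x² / 2)`. -/
lemma gaussianReal_abs_lt_three_quarters :
    gaussianReal 0 1 {s | |s| < 3 / 4} ≤ ENNReal.ofReal (11 / 20) := by
  have hs : {s : ℝ | |s| < 3 / 4} ⊆ Set.Ioc (-(3 / 4)) (3 / 4) := by
    intro s hs
    have := abs_lt.1 (show |s| < 3 / 4 from hs)
    exact ⟨this.1, this.2.le⟩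
  refine (measure_mono hs).trans ?_
  rw [gaussianReal_apply_eq_integral 0 one_ne_zero]
  apply ENNReal.ofReal_le_ofReal
  rw [← intervalIntegral.integral_of_le (by norm_num)]
  have hle : ∫ x in (-(3 / 4 : ℝ))..(3 / 4), gaussianPDFReal 0 1 x ≤
      ∫ x in (-(3 / 4 : ℝ))..(3 / 4), 2 / 5 * (1 - x ^ 2 / 2 + x ^ 4 / 8) := by
    apply intervalIntegral.integral_mono (by norm_num)
      ((integrable_gaussianPDFReal 0 1).intervalIntegrable)
      (Continuous.intervalIntegrable (by fun_prop) _ _)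
    intro x
    refine (gaussianPDFReal_le x).trans ?_
    have := exp_neg_le (u := x ^ 2 / 2) (by positivity)
    have e : (x ^ 2 / 2) ^ 2 / 2 = x ^ 4 / 8 := by ring
    rw [e] at this
    simp only
    linarith
  refine hle.trans ?_
  have hval : ∫ x in (-(3 / 4 : ℝ))..(3 / 4), 2 / 5 * (1 - x ^ 2 / 2 + x ^ 4 / 8)
      = 2 / 5 * (3 / 2 - 9 / 64 + 243 / 20480) := by
    rw [intervalIntegral.integral_const_mul, intervalIntegral.integral_add
      (Continuous.intervalIntegrable (by fun_prop) _ _)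
      (Continuous.intervalIntegrable (by fun_prop) _ _),
      intervalIntegral.integral_sub
      (Continuous.intervalIntegrable (by fun_prop) _ _)
      (Continuous.intervalIntegrable (by fun_prop) _ _)]
    simp only [intervalIntegral.integral_div, integral_pow, intervalIntegral.integral_const]
    norm_num
  rw [hval]
  norm_num

lemma gaussianReal_abs_ge_three_quarters :
    ENNReal.ofReal (9 / 20) ≤ gaussianReal 0 1 {s | 3 / 4 ≤ |s|} := by
  have h := gaussianReal_abs_lt_three_quarters
  have hc : {s : ℝ | 3 / 4 ≤ |s|} = {s : ℝ | |s| < 3 / 4}ᶜ := by ext; simp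
  rw [hc, prob_compl_eq_one_sub (measurableSet_lt (by fun_prop) (by fun_prop))]
  have e : ENNReal.ofReal (9 / 20) = 1 - ENNReal.ofReal (11 / 20) := by
    rw [← ENNReal.ofReal_one, ← ENNReal.ofReal_sub _ (by norm_num)]
    norm_num
  rw [e]
  exact tsub_le_tsub_left h 1

/-- Jensen's inequality for the power `k`. -/
lemma lintegral_pow_le {Ω : Type*} [MeasurableSpace Ω] (μ : Measure Ω) [IsProbabilityMeasure μ]
    {f : Ω → ℝ≥0∞} (hf : AEMeasurable f μ) {k : ℕ} (hk : 1 ≤ k) :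
    (∫⁻ x, f x ∂μ) ^ k ≤ ∫⁻ x, f x ^ k ∂μ := by
  have hk' : (0 : ℝ) < k := by exact_mod_cast hk
  have h := eLpNorm'_le_eLpNorm'_of_exponent_le (μ := μ) (f := f) (p := 1) (q := k)
    one_pos (by exact_mod_cast hk) hf.aestronglyMeasurable
  simp only [eLpNorm'_eq_lintegral_enorm, enorm_eq_self, ENNReal.rpow_one, div_one,
    ENNReal.rpow_natCast] at h
  calc (∫⁻ x, f x ∂μ) ^ k ≤ ((∫⁻ x, f x ^ k ∂μ) ^ (1 / (k : ℝ))) ^ k := by gcongr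
    _ = _ := by
      rw [← ENNReal.rpow_natCast, ← ENNReal.rpow_mul, one_div_mul_cancel hk'.ne', ENNReal.rpow_one]

lemma le_sqrt_of_pow_le {a : ℝ≥0∞} {b : ℝ} {k : ℕ} (hk : 1 ≤ k) (hb : 0 ≤ b)
    (h : a ^ (2 * k) ≤ ENNReal.ofReal (b ^ k)) : a ≤ ENNReal.ofReal (Real.sqrt b) := by
  refine le_of_not_gt fun hlt => ?_
  refine absurd h (not_le_of_gt ?_)
  have : ENNReal.ofReal (b ^ k) = ENNReal.ofReal (Real.sqrt b) ^ (2 * k) := by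
    rw [← ENNReal.ofReal_pow (Real.sqrt_nonneg b), pow_mul, Real.sq_sqrt hb]
  rw [this]
  exact ENNReal.pow_lt_pow_left (by omega) hlt

end Numerics

/-! ### Matrices given by their rows, and tilted kernels -/

section Rows

variable {H : Type*} [NormedAddCommGroup H] [InnerProductSpace ℝ H] {m : ℕ}

/-- The operator `z ↦ (⟪b i, z⟫)ᵢ` of the matrix with rows `b i`. -/
noncomputable def rowOp (b : Fin m → H) : H →L[ℝ] EuclideanSpace ℝ (Fin m) :=
  ∑ i, (innerSL ℝ (b i)).smulRight (EuclideanSpace.single i (1 : ℝ))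

lemma rowOp_apply (b : Fin m → H) (z : H) (i : Fin m) : rowOp b z i = ⟪b i, z⟫ := by
  simp [rowOp, Finset.sum_apply, Pi.single_apply]

lemma continuous_rowOp : Continuous (rowOp : (Fin m → H) → _) := by
  have h : Continuous fun p : (H →L[ℝ] ℝ) × EuclideanSpace ℝ (Fin m) =>
      p.1.smulRight p.2 := by
    exact (ContinuousLinearMap.smulRightL ℝ H (EuclideanSpace ℝ (Fin m))).continuous₂
  unfold rowOp
  refine continuous_finsetSum _ fun i _ => ?_
  exact h.comp (((innerSL ℝ).continuous.comp (continuous_apply i)).prodMk continuous_const)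

lemma rowOp_comp (O : H ≃ₗᵢ[ℝ] H) (b : Fin m → H) (z : H) :
    rowOp (fun i => O (b i)) (O z) = rowOp b z := by
  ext i
  simp [rowOp_apply]

lemma norm_rowOp_comp (O : H ≃ₗᵢ[ℝ] H) (b : Fin m → H) :
    ‖rowOp (fun i => O (b i))‖ = ‖rowOp b‖ := by
  have : rowOp b = (rowOp (fun i => O (b i))).comp
      (O.toContinuousLinearEquiv : H →L[ℝ] H) := by
    ext z : 1
    exact (rowOp_comp O b z).symm
  rw [this]
  exact (ContinuousLinearMap.opNorm_comp_linearIsometryEquiv _ O).symm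

/-- The norm `‖T ·‖` dominates the modulus of a linear form of norm `‖T‖`: the form `⟪y, T ·⟫` for
a vector `y` of the unit ball where the adjoint of `T` attains its norm. -/
lemma exists_form_le {E F : Type*} [NormedAddCommGroup E] [InnerProductSpace ℝ E]
    [NormedAddCommGroup F] [InnerProductSpace ℝ F] [FiniteDimensional ℝ E] [FiniteDimensional ℝ F]
    (T : E →L[ℝ] F) : ∃ q : E, ‖q‖ = ‖T‖ ∧ ∀ g, |⟪q, g⟫| ≤ ‖T g‖ := by
  have := FiniteDimensional.complete ℝ E
  have := FiniteDimensional.complete ℝ F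
  have := FiniteDimensional.proper ℝ F
  set S := ContinuousLinearMap.adjoint T with hS
  have hST : ‖S‖ = ‖T‖ := LinearIsometryEquiv.norm_map _ _
  obtain ⟨y, hy, hmax⟩ := (isCompact_closedBall (0 : F) 1).exists_isMaxOn
    ⟨0, by simp⟩ (f := fun y => ‖S y‖) (by fun_prop)
  have hy1 : ‖y‖ ≤ 1 := by simpa using hy
  refine ⟨S y, le_antisymm ?_ ?_, fun g => ?_⟩
  · rw [← hST]
    calc ‖S y‖ ≤ ‖S‖ * ‖y‖ := S.le_opNorm y
      _ ≤ ‖S‖ := mul_le_of_le_one_right (norm_nonneg _) hy1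
  · rw [← hST]
    refine S.opNorm_le_of_unit_norm (norm_nonneg _) fun x hx => hmax ?_
    simp [hx]
  · rw [hS, ContinuousLinearMap.adjoint_inner_left]
    calc |⟪y, T g⟫| ≤ ‖y‖ * ‖T g‖ := abs_real_inner_le_norm _ _
      _ ≤ ‖T g‖ := mul_le_of_le_one_left (norm_nonneg _) hy1

/-- The set of matrices, given by their rows `b`, whose kernel contains a unit vector `z` with
`K |⟪z, f⟫| ≤ ‖rowOp b‖ √(‖f‖² - ⟪z, f⟫²)`: for `f ≠ 0` and `rowOp b ≠ 0`, the vector `z` makes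
with the line `ℝ f` an angle whose tangent is at least `K / ‖rowOp b‖`. -/
def tilted (m : ℕ) (K : ℝ) (f : H) : Set (Fin m → H) :=
  {b | ∃ z, ‖z‖ = 1 ∧ rowOp b z = 0 ∧
    K ^ 2 * ⟪z, f⟫ ^ 2 ≤ ‖rowOp b‖ ^ 2 * (‖f‖ ^ 2 - ⟪z, f⟫ ^ 2)}

/-- The unit vector `z` ranges over a compact sphere, and projecting along it is a closed map. -/
lemma isClosed_tilted [FiniteDimensional ℝ H] (K : ℝ) :
    IsClosed {p : (Fin m → H) × H | p.1 ∈ tilted m K p.2} := by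
  have := FiniteDimensional.proper ℝ H
  have hS : CompactSpace (Metric.sphere (0 : H) 1) := isCompact_iff_compactSpace.1
    (isCompact_sphere _ _)
  have hr : Continuous fun p : ((Fin m → H) × H) × Metric.sphere (0 : H) 1 => rowOp p.1.1 :=
    continuous_rowOp.comp (by fun_prop)
  have hC : IsClosed {p : ((Fin m → H) × H) × Metric.sphere (0 : H) 1 |
      rowOp p.1.1 (p.2 : H) = 0 ∧ K ^ 2 * ⟪(p.2 : H), p.1.2⟫ ^ 2 ≤
        ‖rowOp p.1.1‖ ^ 2 * (‖p.1.2‖ ^ 2 - ⟪(p.2 : H), p.1.2⟫ ^ 2)} := by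
    have h1 : Continuous fun p : ((Fin m → H) × H) × Metric.sphere (0 : H) 1 =>
      K ^ 2 * ⟪(p.2 : H), p.1.2⟫ ^ 2 := by fun_prop
    have h2 : Continuous fun p : ((Fin m → H) × H) × Metric.sphere (0 : H) 1 =>
      ‖rowOp p.1.1‖ ^ 2 * (‖p.1.2‖ ^ 2 - ⟪(p.2 : H), p.1.2⟫ ^ 2) :=
      (hr.norm.pow 2).mul (by fun_prop)
    exact IsClosed.inter (isClosed_eq (hr.clm_apply (by fun_prop)) continuous_const)
      (isClosed_le h1 h2)
  convert isClosedMap_fst_of_compactSpace _ hC using 1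
  ext p
  constructor
  · rintro ⟨z, hz, h⟩
    exact ⟨(p, ⟨z, by simpa using hz⟩), h, rfl⟩
  · rintro ⟨⟨p', z⟩, h, rfl⟩
    exact ⟨z, by simp, h⟩

lemma tilted_smul (K : ℝ) {r : ℝ} (hr : r ≠ 0) (f : H) :
    tilted m K (r • f) = tilted m K f := by
  ext b
  refine exists_congr fun z => and_congr_right fun _ => and_congr_right fun _ => ?_
  have hr2 : 0 < r ^ 2 := by positivity
  rw [inner_smul_right, norm_smul, mul_pow, mul_pow, Real.norm_eq_abs, sq_abs]
  rw [← mul_le_mul_iff_right₀ hr2 (b := K ^ 2 * ⟪z, f⟫ ^ 2)]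
  constructor <;> intro h <;> linarith

lemma tilted_comp (K : ℝ) (O : H ≃ₗᵢ[ℝ] H) (f : H) (b : Fin m → H) :
    (fun i => O (b i)) ∈ tilted m K (O f) ↔ b ∈ tilted m K f := by
  constructor
  · rintro ⟨z, hz, h0, h⟩
    obtain ⟨w, rfl⟩ := O.surjective z
    rw [rowOp_comp] at h0
    rw [norm_rowOp_comp, O.inner_map_map, O.norm_map] at h
    exact ⟨w, by simpa using hz, h0, h⟩
  · rintro ⟨z, hz, h0, h⟩
    refine ⟨O z, by simpa using hz, by rwa [rowOp_comp], ?_⟩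
    rwa [norm_rowOp_comp, O.inner_map_map, O.norm_map]

/-- Two vectors of the same length are exchanged by a reflection. -/
lemma exists_rotation {e f : H} (h : ‖e‖ = ‖f‖) : ∃ O : H ≃ₗᵢ[ℝ] H, O e = f :=
  ⟨_, Submodule.reflection_sub h⟩

variable [FiniteDimensional ℝ H]

/-- The kernel of `m` independent rows in dimension `m + 1` is a line. -/
lemma exists_kernel_direction (hH : Module.finrank ℝ H = m + 1) {b : Fin m → H}
    (hb : LinearIndependent ℝ b) :
    ∃ θ : H, ‖θ‖ = 1 ∧ ∀ z, rowOp b z = 0 → ∃ r : ℝ, z = r • θ := by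
  have h1 : Module.finrank ℝ (Submodule.span ℝ (Set.range b))ᗮ = 1 := by
    have h := Submodule.finrank_add_finrank_orthogonal (Submodule.span ℝ (Set.range b))
    rw [finrank_span_eq_card hb, Fintype.card_fin] at h
    omega
  obtain ⟨v, hv, hspan⟩ := finrank_eq_one_iff'.1 h1
  have hv0 : (v : H) ≠ 0 := by simpa using hv
  refine ⟨(‖(v : H)‖⁻¹ : ℝ) • (v : H), norm_smul_inv_norm hv0, fun z hz => ?_⟩
  have hzm : z ∈ (Submodule.span ℝ (Set.range b))ᗮ := by
    rw [Submodule.mem_orthogonal]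
    intro u hu
    induction hu using Submodule.span_induction with
    | mem x hx =>
      obtain ⟨i, rfl⟩ := hx
      rw [← rowOp_apply, hz]; rfl
    | zero => simp
    | add x y _ _ hx hy => rw [inner_add_left, hx, hy, add_zero]
    | smul a x _ hx => rw [inner_smul_left, hx, mul_zero]
  obtain ⟨c, hc⟩ := hspan ⟨z, hzm⟩
  refine ⟨c * ‖(v : H)‖, ?_⟩
  have hc' : c • (v : H) = z := congrArg Subtype.val hc
  rw [smul_smul, mul_assoc, mul_inv_cancel₀ (norm_ne_zero_iff.2 hv0), mul_one, hc']

variable [MeasurableSpace H] [BorelSpace H]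

/-- A new independent Gaussian vector almost surely avoids the span of the previous ones. -/
lemma ae_linearIndependent (k : ℕ) (hk : k ≤ Module.finrank ℝ H) :
    ∀ᵐ b ∂(Measure.pi fun _ : Fin k => stdGaussian H), LinearIndependent ℝ b := by
  induction k with
  | zero => exact Filter.Eventually.of_forall fun b => linearIndependent_empty_type
  | succ k ih =>
    have hmp := measurePreserving_piFinSuccAbove (fun _ : Fin (k + 1) => stdGaussian H) 0
    have hmeas : MeasurableSet {b : Fin (k + 1) → H | LinearIndependent ℝ b} :=
      isOpen_setOfPred_linearIndependent.measurableSet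
    have hs := hmp.symm
    rw [← hs.map_eq, ae_map_iff hs.measurable.aemeasurable hmeas]
    have hmeas' := hs.measurable hmeas
    refine (Measure.ae_prod_iff_ae_ae (p := fun x => LinearIndependent ℝ
      ((MeasurableEquiv.piFinSuccAbove (fun _ : Fin (k + 1) => H) 0).symm x)) hmeas').2 ?_
    refine (Measure.ae_ae_comm (p := fun x y => LinearIndependent ℝ
      ((MeasurableEquiv.piFinSuccAbove (fun _ : Fin (k + 1) => H) 0).symm (x, y))) hmeas').2 ?_
    filter_upwards [ih (by omega)] with y hy
    have hspan : Submodule.span ℝ (Set.range y) ≠ ⊤ := by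
      intro h
      have h1 := finrank_span_eq_card hy
      rw [h, finrank_top, Fintype.card_fin] at h1
      omega
    have h0 := stdGaussian_submodule hspan
    filter_upwards [measure_eq_zero_iff_ae_notMem.1 h0] with x hx
    have hcons : (MeasurableEquiv.piFinSuccAbove (fun _ : Fin (k + 1) => H) 0).symm (x, y)
        = Fin.cons x y := by
      simp [MeasurableEquiv.piFinSuccAbove]
      rfl
    rw [hcons]
    exact linearIndependent_finCons.2 ⟨hy, hx⟩

end Rows

/-! ### Rotation invariance -/

section Invariance

variable {H : Type*} [NormedAddCommGroup H] [InnerProductSpace ℝ H] [FiniteDimensional ℝ H]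
  [MeasurableSpace H] [BorelSpace H] {m : ℕ}

lemma measurableSet_tilted (K : ℝ) (f : H) : MeasurableSet (tilted m K f) := by
  exact ((isClosed_tilted (m := m) K).preimage
    (f := fun b : Fin m → H => (b, f)) (by fun_prop)).measurableSet

lemma map_rotation (O : H ≃ₗᵢ[ℝ] H) :
    (Measure.pi fun _ : Fin m => stdGaussian H).map (fun b i => O (b i)) =
      Measure.pi fun _ : Fin m => stdGaussian H := by
  have h : (stdGaussian H).map O = stdGaussian H := stdGaussian_map O
  have : SigmaFinite ((stdGaussian H).map O) := by rw [h]; infer_instance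
  have h2 := Measure.pi_map_pi (μ := fun _ : Fin m => stdGaussian H) (f := fun _ => O)
    (fun _ => by fun_prop)
  rw [h2, h]

/-- By rotation invariance, the probability of `tilted m K f` does not depend on `f`. -/
lemma prob_tilted_eq (K : ℝ) {e f : H} (he : ‖e‖ = 1) (hf : f ≠ 0) :
    (Measure.pi fun _ : Fin m => stdGaussian H) (tilted m K f) =
      (Measure.pi fun _ : Fin m => stdGaussian H) (tilted m K e) := by
  rw [← tilted_smul K (inv_ne_zero (norm_ne_zero_iff.2 hf)) f]
  have hu : ‖e‖ = ‖‖f‖⁻¹ • f‖ := by rw [he]; exact (norm_smul_inv_norm (𝕜 := ℝ) hf).symm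
  obtain ⟨O, hO⟩ := exists_rotation hu
  rw [← hO]
  conv_lhs => rw [← map_rotation O]
  rw [Measure.map_apply (by fun_prop) (measurableSet_tilted K _)]
  congr 1
  ext b
  exact tilted_comp K O e b

end Invariance

/-! ### The kernel of a Gaussian matrix against a random direction -/

section Upper

variable {m : ℕ}

/-- In an orthogonal sum with `ℝ`, the standard Gaussian measure has independent standard Gaussian
components. -/
lemma stdGaussian_prod {E : Type*} [NormedAddCommGroup E] [InnerProductSpace ℝ E]
    [FiniteDimensional ℝ E] [MeasurableSpace E] [BorelSpace E] :
    ((stdGaussian E).prod (gaussianReal 0 1)).map (WithLp.toLp 2) =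
      stdGaussian (WithLp 2 (E × ℝ)) := by
  rw [← stdGaussian_real]
  apply Measure.ext_of_charFun
  ext t
  rw [charFun_prod, charFun_stdGaussian, charFun_stdGaussian, charFun_stdGaussian,
    ← Complex.exp_add]
  congr 1
  have h := WithLp.prod_norm_sq_eq_of_L2 t
  have h' : ((‖t‖ : ℂ)) ^ 2 = (‖t.fst‖ : ℂ) ^ 2 + (‖t.snd‖ : ℂ) ^ 2 := by exact_mod_cast h
  rw [h']
  change -(‖t.fst‖ : ℂ) ^ 2 / 2 + -(‖t.snd‖ : ℂ) ^ 2 / 2 = _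
  ring

lemma lintegral_norm_le_sqrt (hm : 1 ≤ m) :
    ∫⁻ x, ENNReal.ofReal ‖x‖ ∂(stdGaussian (EuclideanSpace ℝ (Fin m))) ≤
      ENNReal.ofReal √m := by
  refine le_sqrt_of_pow_le (k := 1) le_rfl (by positivity) ?_
  refine (lintegral_pow_le _ (by fun_prop) (by norm_num)).trans ?_
  rw [lintegral_norm_pow_stdGaussian (by simp; omega)]
  simp [chiMoment]

/-- The Euclidean space of dimension `m + 1`, with its last coordinate split off. -/
abbrev Amb (m : ℕ) : Type := WithLp 2 (EuclideanSpace ℝ (Fin m) × ℝ)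

/-- The unit vector of the last coordinate. -/
noncomputable def lastVec (m : ℕ) : Amb m := WithLp.toLp 2 (0, 1)

lemma norm_lastVec : ‖lastVec m‖ = 1 := by
  simp [lastVec]

lemma finrank_amb : Module.finrank ℝ (Amb m) = m + 1 := by
  rw [(WithLp.linearEquiv 2 ℝ (EuclideanSpace ℝ (Fin m) × ℝ)).finrank_eq]
  simp

/-- The standard Gaussian measure of the outside of a cone around the axis `ℝ θ`: once `θ` is
rotated to the last coordinate vector, the condition reads `K |s| ≤ N ‖x‖` for independent Gaussian
components `x` and `s`. -/
lemma cone_measure (hm : 1 ≤ m) {K N : ℝ} (hK : 0 < K) (hN : 0 ≤ N) {θ : Amb m} (hθ : ‖θ‖ = 1) :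
    stdGaussian (Amb m) {f | K ^ 2 * ⟪θ, f⟫ ^ 2 ≤ N ^ 2 * (‖f‖ ^ 2 - ⟪θ, f⟫ ^ 2)} ≤
      ENNReal.ofReal (4 / 5 * √m / K) * ENNReal.ofReal N := by
  obtain ⟨O, rfl⟩ := exists_rotation (norm_lastVec.trans hθ.symm : ‖lastVec m‖ = ‖θ‖)
  have hmeas : ∀ θ : Amb m,
      MeasurableSet {f : Amb m | K ^ 2 * ⟪θ, f⟫ ^ 2 ≤ N ^ 2 * (‖f‖ ^ 2 - ⟪θ, f⟫ ^ 2)} :=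
    fun θ => (isClosed_le (by fun_prop) (by fun_prop)).measurableSet
  have hO : (stdGaussian (Amb m)).map O = stdGaussian (Amb m) := stdGaussian_map O
  rw [← hO, Measure.map_apply (by fun_prop) (hmeas _)]
  have h1 : O ⁻¹' {f | K ^ 2 * ⟪O (lastVec m), f⟫ ^ 2 ≤
      N ^ 2 * (‖f‖ ^ 2 - ⟪O (lastVec m), f⟫ ^ 2)} =
      {f | K ^ 2 * ⟪lastVec m, f⟫ ^ 2 ≤ N ^ 2 * (‖f‖ ^ 2 - ⟪lastVec m, f⟫ ^ 2)} := by
    ext f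
    simp only [Set.mem_preimage, Set.mem_ofPred_eq, O.inner_map_map, O.norm_map]
  have hT : Measurable (WithLp.toLp 2 : EuclideanSpace ℝ (Fin m) × ℝ → Amb m) :=
    WithLp.measurable_toLp _ _
  rw [h1, ← stdGaussian_prod, Measure.map_apply hT (hmeas _), Measure.prod_apply (hT (hmeas _))]
  calc ∫⁻ x, gaussianReal 0 1 (Prod.mk x ⁻¹' (WithLp.toLp 2 ⁻¹' {f | K ^ 2 * ⟪lastVec m, f⟫ ^ 2 ≤
        N ^ 2 * (‖f‖ ^ 2 - ⟪lastVec m, f⟫ ^ 2)})) ∂(stdGaussian (EuclideanSpace ℝ (Fin m)))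
      ≤ ∫⁻ x, ENNReal.ofReal (4 / 5 * N / K) * ENNReal.ofReal ‖x‖
        ∂(stdGaussian (EuclideanSpace ℝ (Fin m))) := by
        refine lintegral_mono fun x => ?_
        rw [← ENNReal.ofReal_mul (by positivity)]
        have : 4 / 5 * N / K * ‖x‖ = 4 / 5 * (N * ‖x‖ / K) := by ring
        rw [this]
        refine (measure_mono fun s hs => ?_).trans (gaussianReal_abs_le _)
        have hs' : K ^ 2 * s ^ 2 ≤ N ^ 2 * ‖x‖ ^ 2 := by
          have h2 := WithLp.prod_norm_sq_eq_of_L2 (WithLp.toLp 2 (x, s) : Amb m)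
          have h3 : K ^ 2 * ⟪lastVec m, (WithLp.toLp 2 (x, s) : Amb m)⟫ ^ 2 ≤
            N ^ 2 * (‖(WithLp.toLp 2 (x, s) : Amb m)‖ ^ 2 -
              ⟪lastVec m, (WithLp.toLp 2 (x, s) : Amb m)⟫ ^ 2) := hs
          rw [h2] at h3
          simpa [lastVec, WithLp.prod_inner_apply] using h3
        change |s| ≤ _
        rw [le_div_iff₀ hK]
        refine abs_le_of_sq_le_sq' ?_ (by positivity) |>.2
        rw [mul_pow, sq_abs, mul_pow]
        linarith
    _ = ENNReal.ofReal (4 / 5 * N / K) * ∫⁻ x, ENNReal.ofReal ‖x‖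
        ∂(stdGaussian (EuclideanSpace ℝ (Fin m))) := lintegral_const_mul _ (by fun_prop)
    _ ≤ ENNReal.ofReal (4 / 5 * N / K) * ENNReal.ofReal √m := by
        gcongr
        exact lintegral_norm_le_sqrt hm
    _ = _ := by
        rw [← ENNReal.ofReal_mul (by positivity), ← ENNReal.ofReal_mul (by positivity)]
        congr 1
        ring

/-- For fixed independent rows `b`, the bound on the probability, over a Gaussian reference
vector `f`, that the kernel is tilted from `f`. -/
lemma measure_tilted_le (hm : 1 ≤ m) {K : ℝ} (hK : 0 < K) {b : Fin m → Amb m}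
    (hb : LinearIndependent ℝ b) :
    stdGaussian (Amb m) {f | b ∈ tilted m K f} ≤
      ENNReal.ofReal (4 / 5 * √m / K) * ENNReal.ofReal ‖rowOp b‖ := by
  obtain ⟨θ, hθ, hker⟩ := exists_kernel_direction finrank_amb hb
  refine (measure_mono ?_).trans (cone_measure hm hK (norm_nonneg (rowOp b)) hθ)
  rintro f ⟨z, hz, h0, h⟩
  obtain ⟨r, rfl⟩ := hker z h0
  have hr : r ^ 2 = 1 := by
    rw [norm_smul, hθ, mul_one, Real.norm_eq_abs] at hz
    rw [← sq_abs, hz, one_pow]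
  have h2 : ⟪r • θ, f⟫ ^ 2 = ⟪θ, f⟫ ^ 2 := by
    rw [real_inner_smul_left, mul_pow, hr, one_mul]
  rw [h2] at h
  exact h

/-- Since the probability of `tilted m K f` does not depend on `f ≠ 0`, it may be averaged over a
Gaussian `f`; after exchanging the integrals the rows are fixed and `f` is random. -/
lemma prob_tilted_le_lintegral (hm : 1 ≤ m) {K : ℝ} (hK : 0 < K) :
    (Measure.pi fun _ : Fin m => stdGaussian (Amb m)) (tilted m K (lastVec m)) ≤
      ENNReal.ofReal (4 / 5 * √m / K) * ∫⁻ b, ENNReal.ofReal ‖rowOp b‖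
        ∂(Measure.pi fun _ : Fin m => stdGaussian (Amb m)) := by
  set P := Measure.pi fun _ : Fin m => stdGaussian (Amb m) with hP
  set S := {p : (Fin m → Amb m) × Amb m | p.1 ∈ tilted m K p.2} with hS
  have hSm : MeasurableSet S := (isClosed_tilted K).measurableSet
  have h0 : ∀ᵐ f ∂(stdGaussian (Amb m)), f ≠ 0 := by
    have hbot : (⊥ : Submodule ℝ (Amb m)) ≠ ⊤ := by
      intro h
      have h1 : lastVec m ∈ (⊥ : Submodule ℝ (Amb m)) := h ▸ Submodule.mem_top
      have h2 := norm_lastVec (m := m)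
      rw [(Submodule.mem_bot ℝ).1 h1, norm_zero] at h2
      exact zero_ne_one h2
    filter_upwards [measure_eq_zero_iff_ae_notMem.1 (stdGaussian_submodule hbot)] with f hf
    simpa using hf
  calc P (tilted m K (lastVec m))
      = ∫⁻ f, P (tilted m K f) ∂(stdGaussian (Amb m)) := by
        have : ∀ᵐ f ∂(stdGaussian (Amb m)), P (tilted m K f) = P (tilted m K (lastVec m)) := by
          filter_upwards [h0] with f hf
          exact prob_tilted_eq K norm_lastVec hf
        rw [lintegral_congr_ae this, lintegral_const, measure_univ, mul_one]
    _ = P.prod (stdGaussian (Amb m)) S := (Measure.prod_apply_symm hSm).symm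
    _ = ∫⁻ b, stdGaussian (Amb m) {f | b ∈ tilted m K f} ∂P := Measure.prod_apply hSm
    _ ≤ ∫⁻ b, ENNReal.ofReal (4 / 5 * √m / K) * ENNReal.ofReal ‖rowOp b‖ ∂P := by
        refine lintegral_mono_ae ?_
        filter_upwards [ae_linearIndependent (H := Amb m) m (by rw [finrank_amb]; omega)] with b hb
        exact measure_tilted_le hm hK hb
    _ = _ := lintegral_const_mul _ (by
        have := (continuous_rowOp (H := Amb m) (m := m)).norm.measurable
        fun_prop)

end Upper

/-! ### The expected operator norm -/

section Moments

variable {H : Type*} [NormedAddCommGroup H] [InnerProductSpace ℝ H] [FiniteDimensional ℝ H]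
  [MeasurableSpace H] [BorelSpace H] {m : ℕ}

lemma lintegral_inner_pow (q : H) {k : ℕ} (hk : 1 ≤ k) :
    ∫⁻ f, ENNReal.ofReal |⟪q, f⟫| ^ (2 * k) ∂(stdGaussian H) =
      ENNReal.ofReal ‖q‖ ^ (2 * k) * ENNReal.ofReal (chiMoment k 1) := by
  rcases eq_or_ne q 0 with rfl | hq
  · have : 2 * k ≠ 0 := by omega
    simp [this]
  set u := ‖q‖⁻¹ • q with hu
  have hu1 : ‖u‖ = 1 := norm_smul_inv_norm (𝕜 := ℝ) hq
  have hqu : q = ‖q‖ • u := by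
    rw [hu, smul_smul, mul_inv_cancel₀ (norm_ne_zero_iff.2 hq), one_smul]
  have h1 : ∀ f, ENNReal.ofReal |⟪q, f⟫| ^ (2 * k) =
      ENNReal.ofReal ‖q‖ ^ (2 * k) * ENNReal.ofReal |⟪u, f⟫| ^ (2 * k) := by
    intro f
    conv_lhs => rw [hqu, real_inner_smul_left, abs_mul, abs_norm,
      ENNReal.ofReal_mul (norm_nonneg _), mul_pow]
  simp_rw [h1]
  rw [lintegral_const_mul _ (by fun_prop)]
  congr 1
  have h2 := lintegral_norm_pow_stdGaussian (E := ℝ) (by simp) k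
  rw [stdGaussian_real, ← map_inner_unit hu1, lintegral_map (by fun_prop) (by fun_prop)] at h2
  simpa using h2

/-- A matrix with independent standard Gaussian rows maps a fixed unit vector to a standard Gaussian
vector. -/
lemma map_rowOp_unit {u : H} (hu : ‖u‖ = 1) :
    (Measure.pi fun _ : Fin m => stdGaussian H).map (fun b => rowOp b u) =
      stdGaussian (EuclideanSpace ℝ (Fin m)) := by
  have h : (stdGaussian H).map (fun x => ⟪u, x⟫) = gaussianReal 0 1 := map_inner_unit hu
  have : SigmaFinite ((stdGaussian H).map (fun x => ⟪u, x⟫)) := by rw [h]; infer_instance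
  have h2 := Measure.pi_map_pi (μ := fun _ : Fin m => stdGaussian H)
    (f := fun _ x => ⟪u, x⟫) (fun _ => by fun_prop)
  rw [h] at h2
  rw [← map_pi_eq_stdGaussian, ← h2, Measure.map_map (by fun_prop) (by fun_prop)]
  congr 1
  ext b i
  simp [rowOp_apply, real_inner_comm]

lemma lintegral_rowOp_pow (hm : 1 ≤ m) (f : H) {k : ℕ} (hk : 1 ≤ k) :
    ∫⁻ b, ENNReal.ofReal ‖rowOp b f‖ ^ (2 * k) ∂(Measure.pi fun _ : Fin m => stdGaussian H) =
      ENNReal.ofReal ‖f‖ ^ (2 * k) * ENNReal.ofReal (chiMoment k m) := by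
  rcases eq_or_ne f 0 with rfl | hf
  · have : 2 * k ≠ 0 := by omega
    simp [this]
  set u := ‖f‖⁻¹ • f with hu
  have hu1 : ‖u‖ = 1 := norm_smul_inv_norm (𝕜 := ℝ) hf
  have hfu : f = ‖f‖ • u := by
    rw [hu, smul_smul, mul_inv_cancel₀ (norm_ne_zero_iff.2 hf), one_smul]
  have hmeas : Measurable fun b : Fin m → H => rowOp b u :=
    (continuous_rowOp.clm_apply continuous_const).measurable
  have h1 : ∀ b : Fin m → H, ENNReal.ofReal ‖rowOp b f‖ ^ (2 * k) =
      ENNReal.ofReal ‖f‖ ^ (2 * k) * ENNReal.ofReal ‖rowOp b u‖ ^ (2 * k) := by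
    intro b
    conv_lhs => rw [hfu, map_smul, norm_smul, norm_norm,
      ENNReal.ofReal_mul (norm_nonneg _), mul_pow]
  simp_rw [h1]
  rw [lintegral_const_mul _ (by fun_prop)]
  congr 1
  have h2 := lintegral_norm_pow_stdGaussian (E := EuclideanSpace ℝ (Fin m)) (by simp; omega) k
  rw [← map_rowOp_unit (m := m) hu1, lintegral_map (by fun_prop) hmeas] at h2
  simpa using h2

/-- The moment of order `2m` of the operator norm is compared with that of `‖rowOp b f‖` for an
independent Gaussian `f`: given `b`, the latter dominates `|⟪q, f⟫|` for some `q` of norm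
`‖rowOp b‖`, and given `f`, it is `‖f‖` times the norm of a Gaussian vector in dimension `m`. -/
lemma lintegral_norm_rowOp_le (hm : 1 ≤ m) (hH : Module.finrank ℝ H = m + 1) :
    ∫⁻ b, ENNReal.ofReal ‖rowOp b‖ ∂(Measure.pi fun _ : Fin m => stdGaussian H) ≤
      ENNReal.ofReal √(5.4 * m) := by
  set P := Measure.pi fun _ : Fin m => stdGaussian H with hP
  have hN : Measurable fun b : Fin m → H => ‖rowOp b‖ :=
    (continuous_rowOp (H := H) (m := m)).norm.measurable
  have h1 : (∫⁻ b, ENNReal.ofReal ‖rowOp b‖ ^ (2 * m) ∂P) * ENNReal.ofReal (chiMoment m 1) ≤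
      ENNReal.ofReal ((5.4 * m) ^ m) * ENNReal.ofReal (chiMoment m 1) := by
    calc (∫⁻ b, ENNReal.ofReal ‖rowOp b‖ ^ (2 * m) ∂P) * ENNReal.ofReal (chiMoment m 1)
        = ∫⁻ b, ENNReal.ofReal ‖rowOp b‖ ^ (2 * m) * ENNReal.ofReal (chiMoment m 1) ∂P :=
          (lintegral_mul_const _ (by fun_prop)).symm
      _ ≤ ∫⁻ b, ∫⁻ f, ENNReal.ofReal ‖rowOp b f‖ ^ (2 * m) ∂(stdGaussian H) ∂P := by
          refine lintegral_mono fun b => ?_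
          obtain ⟨q, hq, hle⟩ := exists_form_le (rowOp b)
          rw [← hq, ← lintegral_inner_pow q hm]
          refine lintegral_mono fun f => ?_
          gcongr
          exact hle f
      _ = ∫⁻ f, ∫⁻ b, ENNReal.ofReal ‖rowOp b f‖ ^ (2 * m) ∂P ∂(stdGaussian H) := by
          refine lintegral_lintegral_swap ?_
          have : Continuous fun p : (Fin m → H) × H => rowOp p.1 p.2 :=
            (continuous_rowOp.comp continuous_fst).clm_apply continuous_snd
          have h := this.norm.measurable
          exact (by fun_prop : Measurable fun p : (Fin m → H) × H =>
            ENNReal.ofReal ‖rowOp p.1 p.2‖ ^ (2 * m)).aemeasurable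
      _ = ENNReal.ofReal (chiMoment m (m + 1)) * ENNReal.ofReal (chiMoment m m) := by
          simp_rw [hP, lintegral_rowOp_pow hm _ hm]
          rw [lintegral_mul_const _ (by fun_prop),
            lintegral_norm_pow_stdGaussian (by omega), hH]
          push_cast
          rfl
      _ ≤ _ := by
          have hpos : (0 : ℝ) < m := by exact_mod_cast hm
          rw [← ENNReal.ofReal_mul (chiMoment_pos _ (by positivity)).le,
            ← ENNReal.ofReal_mul (by positivity)]
          refine ENNReal.ofReal_le_ofReal ?_
          rw [mul_comm]
          exact chiMoment_bound m hm
  have hc : 0 < chiMoment m 1 := chiMoment_pos _ one_pos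
  refine le_sqrt_of_pow_le (k := m) hm (by positivity) ?_
  refine (lintegral_pow_le _ hN.ennreal_ofReal.aemeasurable (by omega)).trans ?_
  exact (ENNReal.mul_le_mul_iff_left (by simpa using hc) ENNReal.ofReal_ne_top).1 h1

end Moments

/-! ### The law of the bordered matrix -/

section Law

variable {m : ℕ}

/-- The matrix `ω` bordered on the right by the column `s`, as the family of its rows. -/
def border (ω : Fin m × Fin m → ℝ) (s : Fin m → ℝ) (i : Fin m) : Amb m :=
  WithLp.toLp 2 (WithLp.toLp 2 (fun j => ω (i, j)), s i)

lemma measurable_border :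
    Measurable fun p : (Fin m × Fin m → ℝ) × (Fin m → ℝ) => border p.1 p.2 := by
  unfold border
  refine measurable_pi_lambda _ fun i => ?_
  refine (WithLp.measurable_toLp 2 _).comp (Measurable.prodMk ?_ (by fun_prop))
  exact (WithLp.measurable_toLp 2 _).comp (by fun_prop)

/-- Bordering a square matrix with independent standard Gaussian entries by an independent Gaussian
column gives independent standard Gaussian rows. -/
lemma map_border :
    ((Measure.pi fun _ : Fin m × Fin m => gaussianReal 0 1).prod
      (Measure.pi fun _ : Fin m => gaussianReal 0 1)).map (fun p => border p.1 p.2) =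
      Measure.pi fun _ : Fin m => stdGaussian (Amb m) := by
  set N := gaussianReal 0 1 with hN
  let ψ : (Fin m → ℝ) × ℝ → Amb m := fun p => WithLp.toLp 2 (WithLp.toLp 2 p.1, p.2)
  have hT : Measurable (WithLp.toLp 2 : (Fin m → ℝ) → EuclideanSpace ℝ (Fin m)) :=
    WithLp.measurable_toLp _ _
  have hT' : Measurable (WithLp.toLp 2 : EuclideanSpace ℝ (Fin m) × ℝ → Amb m) :=
    WithLp.measurable_toLp _ _
  have hψm : Measurable ψ :=
    hT'.comp ((hT.comp measurable_fst).prodMk measurable_snd)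
  have hψ : ((Measure.pi fun _ : Fin m => N).prod N).map ψ = stdGaussian (Amb m) := by
    rw [← stdGaussian_prod, ← map_pi_eq_stdGaussian]
    have h := Measure.map_prod_map (Measure.pi fun _ : Fin m => N) N hT measurable_id
    rw [Measure.map_id] at h
    rw [h, Measure.map_map hT' (by fun_prop)]
    rfl
  have hc : (Measure.pi fun _ : Fin m × Fin m => N).map (MeasurableEquiv.curry (Fin m) (Fin m) ℝ) =
      Measure.pi fun _ : Fin m => Measure.pi fun _ : Fin m => N := by
    have h := Measure.infinitePi_map_curry (fun (_ : Fin m) (_ : Fin m) => N)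
    simpa only [Measure.infinitePi_eq_pi] using h
  have hp := (measurePreserving_arrowProdEquivProdArrow (Fin m → ℝ) ℝ (Fin m)
    (fun _ => Measure.pi fun _ : Fin m => N) (fun _ => N)).symm
  have hs : SigmaFinite (((Measure.pi fun _ : Fin m => N).prod N).map ψ) := by
    rw [hψ]; infer_instance
  have hrows := Measure.pi_map_pi (μ := fun _ : Fin m => (Measure.pi fun _ : Fin m => N).prod N)
    (f := fun _ => ψ) (fun _ => hψm.aemeasurable)
  have h := Measure.map_prod_map (Measure.pi fun _ : Fin m × Fin m => N)
    (Measure.pi fun _ : Fin m => N) (MeasurableEquiv.curry (Fin m) (Fin m) ℝ).measurable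
    measurable_id
  rw [hc, Measure.map_id] at h
  rw [hψ] at hrows
  rw [← hrows, ← hp.map_eq, h, Measure.map_map (by fun_prop) (by fun_prop),
    Measure.map_map (by fun_prop) (by fun_prop)]
  rfl

end Law

/-! ### Ill-conditioned matrices have bordered matrices with tilted kernels -/

section Lower

variable {m : ℕ}

/-- The operator of the matrix whose entries are listed by `ω`. -/
noncomputable def matOp (ω : Fin m × Fin m → ℝ) :
    EuclideanSpace ℝ (Fin m) →L[ℝ] EuclideanSpace ℝ (Fin m) :=
  LinearMap.toContinuousLinearMap (Matrix.toEuclideanLin (Matrix.of fun i j : Fin m => ω (i, j)))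

lemma rowOp_border (ω : Fin m × Fin m → ℝ) (s : Fin m → ℝ) (x : EuclideanSpace ℝ (Fin m))
    (t : ℝ) : rowOp (border ω s) (WithLp.toLp 2 (x, t)) = matOp ω x + t • WithLp.toLp 2 s := by
  ext i
  simp [rowOp_apply, border, matOp, WithLp.prod_inner_apply, Matrix.mulVec, dotProduct,
    PiLp.inner_apply, mul_comm]

lemma norm_matOp_le (ω : Fin m × Fin m → ℝ) (s : Fin m → ℝ) :
    ‖matOp ω‖ ≤ ‖rowOp (border ω s)‖ := by
  refine ContinuousLinearMap.opNorm_le_bound _ (norm_nonneg _) fun x => ?_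
  have h := rowOp_border ω s x 0
  rw [zero_smul, add_zero] at h
  have h2 : ‖(WithLp.toLp 2 (x, (0 : ℝ)) : Amb m)‖ = ‖x‖ := by simp
  rw [← h, ← h2]
  exact (rowOp (border ω s)).le_opNorm _

/-- If `A x = 0`, then `(x, 0)` is in the kernel of the bordered matrix and orthogonal to the last
coordinate vector. -/
lemma border_mem_tilted_of_ker {ω : Fin m × Fin m → ℝ} {x : EuclideanSpace ℝ (Fin m)}
    (hx : x ≠ 0) (h : matOp ω x = 0) (K : ℝ) (s : Fin m → ℝ) :
    border ω s ∈ tilted m K (lastVec m) := by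
  have h1 : ‖‖x‖⁻¹ • x‖ = 1 := norm_smul_inv_norm (𝕜 := ℝ) hx
  refine ⟨WithLp.toLp 2 (‖x‖⁻¹ • x, 0), by simpa using h1, ?_, ?_⟩
  · rw [rowOp_border, map_smul, h, smul_zero, zero_smul, add_zero]
  · have h2 : ⟪(WithLp.toLp 2 (‖x‖⁻¹ • x, (0 : ℝ)) : Amb m), lastVec m⟫ = 0 := by
      simp [lastVec, WithLp.prod_inner_apply]
    rw [h2, norm_lastVec]
    simp only [ne_eq, OfNat.ofNat_ne_zero, not_false_eq_true, zero_pow, mul_zero]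
    positivity

/-- If `A w = s`, then `(w, -1)` is in the kernel of the bordered matrix `[A | s]`, and it makes with
the last coordinate axis an angle of tangent `‖w‖`. -/
lemma border_mem_tilted_of_solution {ω : Fin m × Fin m → ℝ} {w : EuclideanSpace ℝ (Fin m)}
    {s : Fin m → ℝ} (h : matOp ω w = WithLp.toLp 2 s) {K : ℝ} (hK : 0 ≤ K)
    (hle : K ≤ ‖rowOp (border ω s)‖ * ‖w‖) :
    border ω s ∈ tilted m K (lastVec m) := by
  set v : Amb m := WithLp.toLp 2 (w, -1) with hv
  have hvn : ‖v‖ ^ 2 = ‖w‖ ^ 2 + 1 := by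
    rw [WithLp.prod_norm_sq_eq_of_L2]
    simp [hv]
  have hv0 : v ≠ 0 := by
    intro h0
    rw [h0, norm_zero] at hvn
    nlinarith [sq_nonneg ‖w‖]
  refine ⟨‖v‖⁻¹ • v, norm_smul_inv_norm (𝕜 := ℝ) hv0, ?_, ?_⟩
  · rw [map_smul, hv, rowOp_border, h]
    simp
  · have h2 : ⟪v, lastVec m⟫ = -1 := by
      simp [hv, lastVec, WithLp.prod_inner_apply]
    have h3 : (‖v‖⁻¹) ^ 2 * (‖w‖ ^ 2 + 1) = 1 := by
      rw [← hvn, ← mul_pow, inv_mul_cancel₀ (norm_ne_zero_iff.2 hv0), one_pow]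
    rw [real_inner_smul_left, h2, norm_lastVec]
    have h4 : (1 : ℝ) ^ 2 - (‖v‖⁻¹ * -1) ^ 2 = (‖v‖⁻¹) ^ 2 * ‖w‖ ^ 2 := by linarith
    have h5 : K ^ 2 ≤ (‖rowOp (border ω s)‖ * ‖w‖) ^ 2 := by gcongr
    rw [h4]
    calc K ^ 2 * (‖v‖⁻¹ * -1) ^ 2 = (‖v‖⁻¹) ^ 2 * K ^ 2 := by ring
      _ ≤ (‖v‖⁻¹) ^ 2 * (‖rowOp (border ω s)‖ * ‖w‖) ^ 2 := by gcongr
      _ = _ := by ring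

/-- For `q ≠ 0`, `⟪q, s⟫ / ‖q‖` is a standard Gaussian variable; for `q = 0` the event is sure. -/
lemma measure_inner_ge (q : EuclideanSpace ℝ (Fin m)) :
    ENNReal.ofReal (9 / 20) ≤ (Measure.pi fun _ : Fin m => gaussianReal 0 1)
      {s | 3 / 4 * ‖q‖ ≤ |⟪q, WithLp.toLp 2 s⟫|} := by
  have hT : Measurable (WithLp.toLp 2 : (Fin m → ℝ) → EuclideanSpace ℝ (Fin m)) :=
    WithLp.measurable_toLp _ _
  rcases eq_or_ne q 0 with rfl | hq
  · simp only [norm_zero, mul_zero, inner_zero_left, abs_zero, le_refl]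
    have : {s : Fin m → ℝ | True} = Set.univ := by ext; simp
    rw [this, measure_univ, ← ENNReal.ofReal_one]
    exact ENNReal.ofReal_le_ofReal (by norm_num)
  have hu1 : ‖‖q‖⁻¹ • q‖ = 1 := norm_smul_inv_norm (𝕜 := ℝ) hq
  have hS : MeasurableSet {t : ℝ | 3 / 4 ≤ |t|} :=
    (isClosed_le continuous_const continuous_abs).measurableSet
  have h := gaussianReal_abs_ge_three_quarters
  rw [← map_inner_unit hu1, Measure.map_apply (by fun_prop) hS, ← map_pi_eq_stdGaussian,
    Measure.map_apply hT ((by fun_prop : Measurable fun f => ⟪‖q‖⁻¹ • q, f⟫) hS)] at h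
  refine h.trans (measure_mono fun s hs => ?_)
  have hsq : 3 / 4 ≤ |⟪‖q‖⁻¹ • q, WithLp.toLp 2 s⟫| := hs
  rw [real_inner_smul_left, abs_mul, abs_inv, abs_norm, inv_mul_eq_div,
    le_div_iff₀ (norm_pos_iff.2 hq)] at hsq
  exact hsq

/-- Over an ill-conditioned matrix `A`, a Gaussian column `s` tilts the kernel of `[A | s]` with
probability at least `9 / 20`: when `A` is invertible, `‖A⁻¹ s‖` is at least `(3 / 4) ‖A⁻¹‖` with
that probability. -/
lemma slice_ge {R : ℝ} (hR : 0 ≤ R) {ω : Fin m × Fin m → ℝ}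
    (h : ¬ IsUnit (Matrix.of fun i j : Fin m => ω (i, j)).det ∨
      R < l2OpNorm (Matrix.of fun i j : Fin m => ω (i, j)) *
        l2OpNorm (Matrix.of fun i j : Fin m => ω (i, j))⁻¹) :
    ENNReal.ofReal (9 / 20) ≤ (Measure.pi fun _ : Fin m => gaussianReal 0 1)
      {s | border ω s ∈ tilted m (3 / 4 * R) (lastVec m)} := by
  set A := Matrix.of fun i j : Fin m => ω (i, j) with hA
  by_cases hdet : IsUnit A.det
  · have h2 := h.resolve_left (not_not_intro hdet)
    obtain ⟨q, hq, hle⟩ := exists_form_le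
      (LinearMap.toContinuousLinearMap (Matrix.toEuclideanLin A⁻¹))
    refine (measure_inner_ge q).trans (measure_mono fun s hs => ?_)
    have hs' : 3 / 4 * ‖q‖ ≤ |⟪q, WithLp.toLp 2 s⟫| := hs
    set w := LinearMap.toContinuousLinearMap (Matrix.toEuclideanLin A⁻¹) (WithLp.toLp 2 s) with hw
    refine border_mem_tilted_of_solution (w := w) ?_ (by positivity) ?_
    · simp [hw, matOp, ← hA, Matrix.toLpLin_apply, Matrix.mulVec_mulVec,
        Matrix.mul_nonsing_inv A hdet]
    · have h3 : 3 / 4 * l2OpNorm A⁻¹ ≤ ‖w‖ := by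
        rw [l2OpNorm, ← hq]
        exact hs'.trans (hle _)
      calc 3 / 4 * R ≤ l2OpNorm A * (3 / 4 * l2OpNorm A⁻¹) := by linarith
        _ ≤ ‖rowOp (border ω s)‖ * ‖w‖ :=
          mul_le_mul (norm_matOp_le ω s) h3 (mul_nonneg (by norm_num) (norm_nonneg _))
            (norm_nonneg _)
  · have hdet0 : A.det = 0 := by simpa [isUnit_iff_ne_zero] using hdet
    obtain ⟨v, hv, hAv⟩ := Matrix.exists_mulVec_eq_zero_iff.2 hdet0
    have hx : (WithLp.toLp 2 v : EuclideanSpace ℝ (Fin m)) ≠ 0 := by simpa using hv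
    have hker : matOp ω (WithLp.toLp 2 v) = 0 := by
      simp [matOp, ← hA, Matrix.toLpLin_apply, hAv]
    have : {s | border ω s ∈ tilted m (3 / 4 * R) (lastVec m)} = Set.univ :=
      Set.eq_univ_of_forall fun s => border_mem_tilted_of_ker hx hker _ s
    rw [this, measure_univ, ← ENNReal.ofReal_one]
    exact ENNReal.ofReal_le_ofReal (by norm_num)

/-- Markov's inequality for the measure of the slices `{s | border ω s ∈ tilted m K (lastVec m)}`,
which is at least `9 / 20` over ill-conditioned `ω`. -/
lemma prob_ill_conditioned_le {R : ℝ} (hR : 0 ≤ R) :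
    ENNReal.ofReal (9 / 20) * (Measure.pi fun _ : Fin m × Fin m => gaussianReal 0 1)
      {ω | ¬ IsUnit (Matrix.of fun i j : Fin m => ω (i, j)).det ∨
        R < l2OpNorm (Matrix.of fun i j : Fin m => ω (i, j)) *
          l2OpNorm (Matrix.of fun i j : Fin m => ω (i, j))⁻¹} ≤
      (Measure.pi fun _ : Fin m => stdGaussian (Amb m))
        (tilted m (3 / 4 * R) (lastVec m)) := by
  have hS := measurable_border (m := m) (measurableSet_tilted (m := m) (3 / 4 * R) (lastVec m))
  rw [← map_border, Measure.map_apply measurable_border (measurableSet_tilted _ _),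
    Measure.prod_apply hS]
  refine le_trans ?_ (mul_meas_ge_le_lintegral (measurable_measure_prodMk_left hS)
    (ENNReal.ofReal (9 / 20)))
  gcongr
  exact fun h => slice_ge hR h

end Lower

end GaussCond

/-- An `m × m` matrix (`m ≥ 3`) with i.i.d. standard Gaussian entries is singular or has
`κ₂ > mα` with probability strictly less than `5.6/α`, for every `α > 1`. -/
theorem stmt_17 (m : ℕ) (hm : 3 ≤ m)
    (μ : Measure ((Fin m × Fin m) → ℝ))
    (hμ : μ = Measure.pi fun _ : Fin m × Fin m => gaussianReal 0 1)
    (α : ℝ) (hα : 1 < α) :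
    μ {ω | ¬ IsUnit (Matrix.of fun i j : Fin m => ω (i, j)).det ∨
        (m : ℝ) * α < l2OpNorm (Matrix.of fun i j : Fin m => ω (i, j)) *
          l2OpNorm (Matrix.of fun i j : Fin m => ω (i, j))⁻¹} <
      ENNReal.ofReal (5.6 / α) := by
  have hm1 : 1 ≤ m := by omega
  have hmpos : (0 : ℝ) < m := by exact_mod_cast hm1
  have hαpos : 0 < α := by linarith
  rw [hμ]
  have h1 := GaussCond.prob_ill_conditioned_le (m := m) (R := m * α) (by positivity)
  have h2 := GaussCond.prob_tilted_le_lintegral hm1 (K := 3 / 4 * (m * α)) (by positivity)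
  have h3 := GaussCond.lintegral_norm_rowOp_le (H := GaussCond.Amb m) hm1
    GaussCond.finrank_amb
  have h4 := h1.trans (h2.trans (mul_le_mul_right h3 _))
  rw [← ENNReal.ofReal_mul (by positivity)] at h4
  by_contra! hcon
  have h5 := (mul_le_mul_right hcon (ENNReal.ofReal (9 / 20))).trans h4
  rw [← ENNReal.ofReal_mul (by positivity), ENNReal.ofReal_le_ofReal_iff (by positivity)] at h5
  have h6 : √(5.4 * m) = √5.4 * √m := Real.sqrt_mul (by norm_num) _
  have h7 : √(m : ℝ) * √m = m := Real.mul_self_sqrt hmpos.le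
  have h8 : 4 / 5 * √(m : ℝ) / (3 / 4 * (m * α)) * √(5.4 * m) = 16 / 15 * √5.4 / α := by
    rw [h6]
    calc 4 / 5 * √(m : ℝ) / (3 / 4 * (m * α)) * (√5.4 * √m)
        = 4 / 5 * √5.4 * (√(m : ℝ) * √m) / (3 / 4 * (m * α)) := by ring
      _ = 16 / 15 * √5.4 / α := by
        rw [h7]
        field_simp
        norm_num
  -- The constants: `16 / 15 * √5.4 < 2.52 = 9 / 20 * 5.6`.
  have h9 : √(5.4 : ℝ) < 2.33 := by
    rw [Real.sqrt_lt' (by norm_num)]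
    norm_num
  rw [h8, mul_div_assoc', div_le_div_iff_of_pos_right hαpos] at h5
  linarith
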